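/- If the L-structure on ℚ is an o-minimal expansion of (ℚ,<,+,0,1), then it is ℚ-linearly bounded: for every definable function f : ℚ → ℚ there exist a positive integer n and a ∈ ℚ such that |f(x)| < n·|x| for all x ∈ ℚ with |x| > |a| (|·| being the usual absolute value on ℚ). -/

import Mathlib

open FirstOrder Language Set

namespace OMinQ

open Filter Topology

/-! ### Analytic part -/

/-- Forward difference. -/
def T (g : ℚ → ℚ) (t x : ℚ) : ℚ := g (x + t) - g x

section analytic

variable {g : ℚ → ℚ} (htop : Tendsto g atTop atTop)
  (hsub : ∀ ε : ℚ, 0 < ε → ∀ᶠ x in atTop, g x ≤ ε * x)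

lemma shift_tendsto (c : ℚ) : Tendsto (fun x : ℚ => x + c) atTop atTop :=
  tendsto_atTop_add_const_right _ _ tendsto_id

lemma step_tendsto (x : ℚ) {t : ℚ} (ht : 0 < t) :
    Tendsto (fun n : ℕ => x + n * t) atTop atTop :=
  tendsto_atTop_add_const_left _ _ (tendsto_natCast_atTop_atTop.atTop_mul_const ht)

include htop in
lemma not_bounded_steps (x : ℚ) {t : ℚ} (ht : 0 < t) (B : ℚ)
    (h : ∀ n : ℕ, g (x + n * t) ≤ B) : False := by
  obtain ⟨n, hn⟩ := ((htop.comp (step_tendsto x ht)).eventually_gt_atTop B).exists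
  exact absurd (h n) (not_le.2 hn)

include hsub in
lemma not_linear_steps (x : ℚ) {t c : ℚ} (ht : 0 < t) (hc : 0 < c)
    (h : ∀ n : ℕ, c ≤ T g t (x + n * t)) : False := by
  have h1 : ∀ n : ℕ, g x + n * c ≤ g (x + n * t) := by
    intro n
    induction n with
    | zero => simp
    | succ n ih =>
      have := h n
      unfold T at this
      push_cast
      rw [show x + (n + 1) * t = x + n * t + t by ring]
      linarith
  have hε : 0 < c / (2 * t) := by positivity
  have h2 := (step_tendsto x ht).eventually (hsub _ hε)
  have h3 : Tendsto (fun n : ℕ => (n : ℚ) * (c / 2)) atTop atTop :=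
    tendsto_natCast_atTop_atTop.atTop_mul_const (by positivity)
  obtain ⟨n, hn1, hn2⟩ := (h2.and (h3.eventually_gt_atTop (c / (2 * t) * x - g x))).exists
  have h4 := h1 n
  have h5 : c / (2 * t) * (x + n * t) = c / (2 * t) * x + n * (c / 2) := by
    field_simp
  rw [h5] at hn1
  linarith

variable (hdich : ∀ (t : ℚ) (a b : ℕ), 0 < t →
    (∀ᶠ x in atTop, a * T g t x < b * T g t (x + t)) ∨
    (∀ᶠ x in atTop, ¬ (a * T g t x < b * T g t (x + t))))

include htop hdich in
lemma T_pos {t : ℚ} (ht : 0 < t) : ∀ᶠ x in atTop, 0 < T g t x := by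
  have h0 : ∀ᶠ x in atTop, 0 < T g t (x + t) := by
    rcases hdich t 0 1 ht with h | h
    · filter_upwards [h] with x hx
      simpa using hx
    · exfalso
      obtain ⟨X, hX⟩ := eventually_atTop.1 h
      refine not_bounded_steps htop (X + t) ht (g (X + t)) fun n => ?_
      induction n with
      | zero => simp
      | succ n ih =>
        have := hX (X + n * t) (by nlinarith [n.cast_nonneg (α := ℚ)])
        simp only [T, Nat.cast_zero, zero_mul, Nat.cast_one, one_mul, not_lt] at this
        push_cast
        rw [show X + t + (n + 1) * t = X + n * t + t + t by ring]
        rw [show X + t + n * t = X + n * t + t by ring] at ih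
        linarith
  have := (shift_tendsto (-t)).eventually h0
  filter_upwards [this] with x hx
  simpa using hx

include htop hsub hdich in
lemma T_decr {t : ℚ} (ht : 0 < t) : ∀ᶠ x in atTop, T g t (x + t) ≤ T g t x := by
  rcases hdich t 1 1 ht with h | h
  · exfalso
    obtain ⟨X, hX, hX0⟩ := (h.and (T_pos htop hdich ht)).exists_forall_of_atTop.imp
      (fun X hX => (⟨fun x hx => (hX x hx).1, (hX X le_rfl).2⟩ :
        (∀ x ≥ X, _) ∧ 0 < T g t X))
    refine not_linear_steps hsub X ht hX0 fun n => ?_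
    induction n with
    | zero => simp
    | succ n ih =>
      have := hX (X + n * t) (by nlinarith [n.cast_nonneg (α := ℚ)])
      push_cast
      rw [show X + (n + 1) * t = X + n * t + t by ring]
      simp only [Nat.cast_one, one_mul] at this
      linarith
  · filter_upwards [h] with x hx
    simpa using hx

include htop hdich in
lemma T_ratio_lb {t : ℚ} (ht : 0 < t) {q : ℚ} (hq0 : 0 ≤ q) (hq : q < 1) :
    ∀ᶠ x in atTop, q * T g t x < T g t (x + t) := by
  have hden : (0 : ℚ) < q.den := by exact_mod_cast q.den_pos
  have hnum : ((q.num.toNat : ℕ) : ℚ) = q * q.den := by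
    rw [Rat.mul_den_eq_num]
    have : ((q.num.toNat : ℕ) : ℤ) = q.num := Int.toNat_of_nonneg (Rat.num_nonneg.2 hq0)
    exact_mod_cast this
  rcases hdich t q.num.toNat q.den ht with h | h
  · filter_upwards [h] with x hx
    rw [hnum] at hx
    nlinarith
  · exfalso
    have h' : ∀ᶠ x in atTop, T g t (x + t) ≤ q * T g t x := by
      filter_upwards [h] with x hx
      rw [hnum] at hx
      by_contra hc
      push Not at hc
      apply hx
      nlinarith
    obtain ⟨X, hX⟩ := eventually_atTop.1 (h'.and (T_pos htop hdich ht))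
    have hq1 : 0 < 1 - q := by linarith
    -- g(X+nt) + T(X+nt)/(1-q) is nonincreasing
    have key : ∀ n : ℕ, (1 - q) * g (X + n * t) + T g t (X + n * t)
        ≤ (1 - q) * g X + T g t X := by
      intro n
      induction n with
      | zero => simp
      | succ n ih =>
        have := (hX (X + n * t) (by nlinarith [n.cast_nonneg (α := ℚ)])).1
        push_cast
        rw [show X + (n + 1) * t = X + n * t + t by ring]
        have h3 : g (X + n * t + t) = g (X + n * t) + T g t (X + n * t) := by
          unfold T; ring
        rw [h3]
        nlinarith
    refine not_bounded_steps htop X ht (((1 - q) * g X + T g t X) / (1 - q)) fun n => ?_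
    rw [le_div_iff₀ hq1]
    have := (hX (X + n * t) (by nlinarith [n.cast_nonneg (α := ℚ)])).2
    nlinarith [key n]

include htop hsub hdich in
lemma T_ratio {t : ℚ} (ht : 0 < t) :
    Tendsto (fun x => T g t (x + t) / T g t x) atTop (𝓝 1) := by
  rw [tendsto_order]
  constructor
  · intro a ha
    filter_upwards [T_ratio_lb htop hdich ht (q := max a 0) (le_max_right _ _)
      (max_lt ha one_pos), T_pos htop hdich ht] with x hx hp
    rw [lt_div_iff₀ hp]
    nlinarith [le_max_left a 0]
  · intro a ha
    filter_upwards [T_decr htop hsub hdich ht, T_pos htop hdich ht] with x hx hp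
    rw [div_lt_iff₀ hp]
    nlinarith

include htop hsub hdich in
lemma T_ratio_k {t : ℚ} (ht : 0 < t) (k : ℕ) :
    Tendsto (fun x => T g t (x + k * t) / T g t x) atTop (𝓝 1) := by
  induction k with
  | zero =>
    refine tendsto_const_nhds.congr' ?_
    filter_upwards [T_pos htop hdich ht] with x hp
    simp [hp.ne']
  | succ k ih =>
    have h1 := (T_ratio htop hsub hdich ht).comp (shift_tendsto (k * t))
    have h2 := h1.mul ih
    rw [one_mul] at h2
    refine h2.congr' ?_
    filter_upwards [(shift_tendsto (k * t)).eventually (T_pos htop hdich ht)] with x hp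
    simp only [Function.comp]
    rw [div_mul_div_cancel₀ hp.ne']
    push_cast
    rw [show x + (k + 1) * t = x + k * t + t by ring]

include htop hsub hdich in
lemma T_mult {t : ℚ} (ht : 0 < t) (k : ℕ) :
    Tendsto (fun x => T g (k * t) x / T g t x) atTop (𝓝 (k : ℚ)) := by
  induction k with
  | zero => simp [T]
  | succ k ih =>
    have := ih.add (T_ratio_k htop hsub hdich ht k)
    push_cast
    refine this.congr fun x => ?_
    rw [← add_div]
    congr 1
    unfold T
    rw [show x + (k + 1) * t = x + k * t + t by ring]
    ring

include htop hsub hdich in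
lemma T_lin {l : ℚ} (hl : 0 < l) :
    Tendsto (fun x => T g l x / T g 1 x) atTop (𝓝 l) := by
  have hden : (0 : ℚ) < l.den := by exact_mod_cast l.den_pos
  have hnum : ((l.num.toNat : ℕ) : ℚ) = l * l.den := by
    rw [Rat.mul_den_eq_num]
    have : ((l.num.toNat : ℕ) : ℤ) = l.num := Int.toNat_of_nonneg (Rat.num_nonneg.2 hl.le)
    exact_mod_cast this
  have ht : (0 : ℚ) < 1 / l.den := by positivity
  have h1 := T_mult htop hsub hdich ht l.num.toNat
  have h2 := T_mult htop hsub hdich ht l.den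
  have h3 := h1.div h2 hden.ne'
  rw [hnum] at h3
  rw [show l * (l.den : ℚ) * (1 / l.den) = l by field_simp,
    show (l.den : ℚ) * (1 / l.den) = 1 by field_simp,
    show l * (l.den : ℚ) / l.den = l by field_simp] at h3
  refine h3.congr' ?_
  filter_upwards [T_pos htop hdich ht] with x hp
  simp only [Pi.div_apply]
  rw [div_div_div_cancel_right₀ hp.ne']

/-- The cut at `√2`. -/
def InS (g : ℚ → ℚ) (l : ℚ) : Prop :=
  ∃ X, ∀ x, X < x → ∃ y, x < y ∧ T g l y ≤ T g 1 x ∧ T g l x ≤ T g 2 y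

include htop hsub hdich in
lemma inS_of {l : ℚ} (hl1 : 1 ≤ l) (hl : l ^ 2 < 2) : InS g l := by
  have hl0 : 0 < l := by linarith
  have h0 : l < 2 / l := by rw [lt_div_iff₀ hl0]; nlinarith
  obtain ⟨r1, hr1, h1⟩ := exists_between h0
  obtain ⟨r2, hr2, h2⟩ := exists_between h1
  have hr10 : 0 < r1 := by linarith
  have hr20 : 0 < r2 := by linarith
  -- margins
  have hl2 : l * r2 < 2 := by rw [lt_div_iff₀ hl0] at h2; linarith
  obtain ⟨m, hm1, hm2⟩ := exists_between hl2
  have e1 := (T_lin htop hsub hdich hl0).eventually_lt_const hr1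
  have e2 := (T_lin htop hsub hdich hl0).eventually_lt_const
    (show l < m / r2 by rw [lt_div_iff₀ hr20]; exact hm1)
  have e3 := (T_lin htop hsub hdich (l := 2) two_pos).eventually_const_lt hm2
  have e4 := T_pos htop hdich (t := 1) one_pos
  have e5 := T_ratio_lb htop hdich (t := 1) one_pos (q := r1 / r2) (by positivity)
    ((div_lt_one hr20).2 hr2)
  obtain ⟨X, hX⟩ := eventually_atTop.1 (e1.and (e2.and (e3.and (e4.and e5))))
  refine ⟨X, fun x hx => ?_⟩
  have hxn : ∀ n : ℕ, X ≤ x + n := fun n => by linarith [n.cast_nonneg (α := ℚ)]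
  have hex : ∃ n : ℕ, r1 * T g 1 (x + n) ≤ T g 1 x := by
    by_contra hcon
    push Not at hcon
    refine not_linear_steps hsub x (t := 1) (c := T g 1 x / r1) one_pos
      (div_pos (hX x hx.le).2.2.2.1 hr10) fun n => ?_
    rw [div_le_iff₀ hr10, mul_one]
    linarith [hcon n]
  classical
  obtain ⟨n, hn, hmin⟩ : ∃ n : ℕ, r1 * T g 1 (x + n) ≤ T g 1 x ∧
      ∀ m < n, ¬ r1 * T g 1 (x + m) ≤ T g 1 x :=
    ⟨Nat.find hex, Nat.find_spec hex, fun m hm => Nat.find_min hex hm⟩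
  have hTx := (hX x hx.le).2.2.2.1
  cases n with
  | zero =>
    exfalso
    simp at hn
    nlinarith
  | succ n =>
    have h3 := hmin n (Nat.lt_succ_self n)
    push Not at h3
    obtain ⟨-, -, -, p4, p5⟩ := hX (x + n) (hxn n)
    obtain ⟨q1, q2, q3, q4, q5⟩ := hX (x + (n + 1 : ℕ)) (hxn (n + 1))
    obtain ⟨-, s2, -, s4, -⟩ := hX x hx.le
    refine ⟨x + (n + 1 : ℕ), by push_cast; linarith [n.cast_nonneg (α := ℚ)], ?_, ?_⟩
    · rw [div_lt_iff₀ q4] at q1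
      linarith
    · have h4 : T g 1 x < r2 * T g 1 (x + (n + 1 : ℕ)) := by
        push_cast
        rw [← add_assoc]
        rw [div_mul_eq_mul_div, div_lt_iff₀ hr20] at p5
        linarith
      rw [div_lt_iff₀ s4, div_mul_eq_mul_div, lt_div_iff₀ hr20] at s2
      rw [lt_div_iff₀ q4] at q3
      have hmpos : 0 < m := by nlinarith
      have : T g l x * r2 < m * (r2 * T g 1 (x + (n + 1 : ℕ))) := by nlinarith
      have : T g l x < m * T g 1 (x + (n + 1 : ℕ)) := by
        by_contra hc
        push Not at hc
        nlinarith
      linarith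

include htop hsub hdich in
lemma not_inS_of {l : ℚ} (hl1 : 1 ≤ l) (hl : 2 < l ^ 2) : ¬ InS g l := by
  rintro ⟨X, hX⟩
  have hl0 : 0 < l := by linarith
  -- choose a < l with 2 < a ^ 2
  obtain ⟨d, hd1, hd2⟩ := exists_between (show 2 / l < l by rw [div_lt_iff₀ hl0]; nlinarith)
  have hd0 : 0 < d := lt_trans (by positivity) hd1
  rw [div_lt_iff₀ hl0] at hd1
  obtain ⟨e, he1, he2⟩ := exists_between (show 2 / d < l by rw [div_lt_iff₀ hd0]; linarith)
  have he0 : 0 < e := lt_trans (by positivity) he1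
  rw [div_lt_iff₀ hd0] at he1
  have e1 := (T_lin htop hsub hdich hl0).eventually_const_lt hd2
  have e2 := (T_lin htop hsub hdich hl0).eventually_const_lt he2
  have e3 := (T_lin htop hsub hdich (l := 2) two_pos).eventually_lt_const he1
  have e4 := T_pos htop hdich (t := 1) one_pos
  obtain ⟨Y, hY⟩ := eventually_atTop.1 (e1.and (e2.and (e3.and e4)))
  obtain ⟨y, hxy, h1, h2⟩ := hX (max X Y + 1) (by linarith [le_max_left X Y])
  set x := max X Y + 1
  have hxY : Y ≤ x := by linarith [le_max_right X Y, show x = max X Y + 1 from rfl]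
  obtain ⟨p1, p2, p3, p4⟩ := hY x hxY
  obtain ⟨q1, q2, q3, q4⟩ := hY y (by linarith)
  rw [lt_div_iff₀ p4] at p1 p2
  rw [lt_div_iff₀ q4] at q1 q2
  rw [div_lt_iff₀ q4] at q3
  nlinarith

end analytic

end OMinQ
namespace OMinQ

open Filter Topology

/-! ### O-minimality consequences -/

/-- The shape of definable subsets of the line. -/
def Tame (S : Set ℚ) : Prop :=
  ∃ T : Finset (Set ℚ), S = ⋃₀ ↑T ∧ ∀ I ∈ T,
        (∃ a : ℚ, I = {a}) ∨ (∃ a b : ℚ, I = Set.Ioo a b) ∨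
          (∃ b : ℚ, I = Set.Iio b) ∨ (∃ a : ℚ, I = Set.Ioi a) ∨ I = univ

lemma Tame.dich {S : Set ℚ} (h : Tame S) :
    (∀ᶠ x in atTop, x ∈ S) ∨ (∀ᶠ x in atTop, x ∉ S) := by
  obtain ⟨T, rfl, hT⟩ := h
  by_cases hc : ∃ I ∈ T, ∀ᶠ x in atTop, x ∈ I
  · obtain ⟨I, hI, h⟩ := hc
    left
    filter_upwards [h] with x hx
    exact ⟨I, hI, hx⟩
  · right
    have h1 : ∀ I ∈ T, ∀ᶠ x in atTop, x ∉ I := by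
      intro I hI
      rcases hT I hI with ⟨a, rfl⟩ | ⟨a, b, rfl⟩ | ⟨b, rfl⟩ | ⟨a, rfl⟩ | rfl
      · filter_upwards [eventually_gt_atTop a] with x hx
        simpa using hx.ne'
      · filter_upwards [eventually_gt_atTop b] with x hx h
        exact absurd h.2 (not_lt.2 hx.le)
      · filter_upwards [eventually_gt_atTop b] with x hx h
        exact absurd h (not_lt.2 hx.le)
      · exact absurd ⟨_, hI, eventually_gt_atTop a⟩ hc
      · exact absurd ⟨_, hI, Eventually.of_forall fun x => mem_univ x⟩ hc
    filter_upwards [(eventually_all_finset T).2 h1] with x hx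
    rintro ⟨I, hI, hxI⟩
    exact hx I hI hxI

lemma Tame.cut {S : Set ℚ} (h : Tame S) (hup : ∀ x ∈ S, ∀ y, x ≤ y → y ∈ S)
    (hne : S.Nonempty) (hnu : ∃ z, z ∉ S) :
    ∃ c, (∀ x, c < x → x ∈ S) ∧ ∀ x, x < c → x ∉ S := by
  obtain ⟨z, hz⟩ := hnu
  have hlb : ∀ x ∈ S, z < x := fun x hx => by
    by_contra hc
    exact hz (hup x hx z (not_lt.1 hc))
  obtain ⟨T, hS, hT⟩ := h
  have hI : ∀ I ∈ T, I = ∅ ∨ ∃ a, IsGLB I a := by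
    intro I hI
    have hIS : I ⊆ S := by rw [hS]; exact subset_sUnion_of_mem hI
    rcases hT I hI with ⟨a, rfl⟩ | ⟨a, b, rfl⟩ | ⟨b, rfl⟩ | ⟨a, rfl⟩ | rfl
    · exact Or.inr ⟨a, isGLB_singleton⟩
    · rcases lt_or_ge a b with h | h
      · exact Or.inr ⟨a, isGLB_Ioo h⟩
      · exact Or.inl (Ioo_eq_empty (not_lt.2 h))
    · exfalso
      have hb : min (b - 1) z < b := lt_of_le_of_lt (min_le_left _ _) (by linarith)
      have := hlb (min (b - 1) z) (hIS (mem_Iio.2 hb))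
      exact absurd this (not_lt.2 (min_le_right _ _))
    · exact Or.inr ⟨a, isGLB_Ioi⟩
    · exact absurd (hIS (mem_univ z)) hz
  have hU : ∀ T : Finset (Set ℚ), (∀ I ∈ T, I = ∅ ∨ ∃ a, IsGLB I a) →
      (⋃₀ (↑T : Set (Set ℚ)) = ∅ ∨ ∃ a, IsGLB (⋃₀ (↑T : Set (Set ℚ))) a) := by
    classical
    intro T
    induction T using Finset.induction_on with
    | empty => intro _; left; simp
    | insert I T _ ih =>
      intro h
      have h1 := ih fun J hJ => h J (Finset.mem_insert_of_mem hJ)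
      have h2 := h I (Finset.mem_insert_self _ _)
      rw [Finset.coe_insert, sUnion_insert]
      rcases h2 with rfl | ⟨a, ha⟩
      · simpa using h1
      · rcases h1 with h1 | ⟨b, hb⟩
        · rw [h1]; right; exact ⟨a, by simpa using ha⟩
        · right; exact ⟨_, ha.union hb⟩
  rcases hU T hI with h | ⟨c, hc⟩
  · rw [← hS] at h
    simp [h] at hne
  · rw [← hS] at hc
    refine ⟨c, fun x hx => ?_, fun x hx hxS => absurd (hc.1 hxS) (not_le.2 hx)⟩
    obtain ⟨s, hs, _, hsx⟩ := hc.exists_between hx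
    exact hup s hs x hsx.le

/-! ### Definability calculus -/

section defcalc

variable {L : Language} [L.Structure ℚ]

variable (L) in
/-- Definable predicate on tuples. -/
def DP {α : Type} (P : (α → ℚ) → Prop) : Prop := (univ : Set ℚ).Definable L {v | P v}

variable (L) in
/-- Definable function on tuples. -/
def DF {α : Type} (F : (α → ℚ) → ℚ) : Prop := (univ : Set ℚ).DefinableFun L F

variable (L) in
/-- Definable unary function. -/
def DU (f : ℚ → ℚ) : Prop := (univ : Set ℚ).Definable L {p : Fin 2 → ℚ | p 1 = f (p 0)}

variable {α : Type}

lemma DP.not {P : (α → ℚ) → Prop} (h : DP L P) : DP L (fun v => ¬ P v) := Definable.compl h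

lemma DP.and {P Q : (α → ℚ) → Prop} (h : DP L P) (h' : DP L Q) : DP L (fun v => P v ∧ Q v) :=
  Definable.inter h h'

lemma DP.or {P Q : (α → ℚ) → Prop} (h : DP L P) (h' : DP L Q) : DP L (fun v => P v ∨ Q v) :=
  Definable.union h h'

lemma DP.congr {P Q : (α → ℚ) → Prop} (h : DP L P) (h' : ∀ v, P v ↔ Q v) : DP L Q := by
  have : P = Q := funext fun v => propext (h' v)
  rwa [← this]

lemma DP.imp {P Q : (α → ℚ) → Prop} (h : DP L P) (h' : DP L Q) : DP L (fun v => P v → Q v) :=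
  (h.not.or h').congr fun v => by tauto

lemma DP.ex {P : (α → ℚ) → ℚ → Prop}
    (h : DP L (fun w : α ⊕ Unit → ℚ => P (fun i => w (Sum.inl i)) (w (Sum.inr ())))) :
    DP L (fun v => ∃ y, P v y) := by
  refine DP.congr (Definable.exists_of_finite h) fun v => ?_
  constructor
  · rintro ⟨u, hu⟩
    exact ⟨u (), hu⟩
  · rintro ⟨y, hy⟩
    exact ⟨fun _ => y, hy⟩

lemma DP.all {P : (α → ℚ) → ℚ → Prop}
    (h : DP L (fun w : α ⊕ Unit → ℚ => P (fun i => w (Sum.inl i)) (w (Sum.inr ())))) :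
    DP L (fun v => ∀ y, P v y) :=
  (DP.ex (P := fun v y => ¬ P v y) h.not).not.congr fun v => by simp

lemma DF.var (i : α) : DF L (fun v : α → ℚ => v i) := DefinableFun.proj L

lemma DF.const (a : ℚ) : DF L (fun _ : α → ℚ => a) := L.definableFun_const α (mem_univ a)

lemma DP.eq {F G : (α → ℚ) → ℚ} (hF : DF L F) (hG : DF L G) : DP L (fun v => F v = G v) :=
  DefinableFun.ofPred_eq hF hG

lemma DP.rel2 {R : ℚ → ℚ → Prop} (hR : (univ : Set ℚ).Definable L {p : Fin 2 → ℚ | R (p 0) (p 1)})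
    {F G : (α → ℚ) → ℚ} (hF : DF L F) (hG : DF L G) : DP L (fun v => R (F v) (G v)) := by
  have hM : (univ : Set ℚ).DefinableMap L (fun v : α → ℚ => ![F v, G v]) := by
    intro i
    fin_cases i
    · exact hF
    · exact hG
  exact hR.preimage_map hM

lemma DP.rel3 {R : ℚ → ℚ → ℚ → Prop}
    (hR : (univ : Set ℚ).Definable L {p : Fin 3 → ℚ | R (p 0) (p 1) (p 2)})
    {F G H : (α → ℚ) → ℚ} (hF : DF L F) (hG : DF L G) (hH : DF L H) :
    DP L (fun v => R (F v) (G v) (H v)) := by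
  have hM : (univ : Set ℚ).DefinableMap L (fun v : α → ℚ => ![F v, G v, H v]) := by
    intro i
    fin_cases i
    · exact hF
    · exact hG
    · exact hH
  exact hR.preimage_map hM

lemma DF.of_graph {F : (α → ℚ) → ℚ}
    (h : DP L (fun w : Option α → ℚ => F (fun i => w (some i)) = w none)) : DF L F := h

lemma DF.lift {F : (α → ℚ) → ℚ} (h : DF L F) :
    DF L (fun w : Option α → ℚ => F (fun i => w (some i))) := by
  refine DF.of_graph ?_
  exact Definable.preimage_comp (fun | none => none | some i => some (some i)) h

lemma DF.app {f : ℚ → ℚ} (hf : DU L f) {F : (α → ℚ) → ℚ} (hF : DF L F) :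
    DF L (fun v => f (F v)) :=
  DF.of_graph ((DP.rel2 (R := fun x y => y = f x) hf hF.lift (DF.var none)).congr
    fun v => eq_comm)

/-- Definability of order and addition. -/
structure Good (L : Language) [L.Structure ℚ] : Prop where
  lt : (univ : Set ℚ).Definable L {p : Fin 2 → ℚ | p 0 < p 1}
  add : (univ : Set ℚ).Definable L {p : Fin 3 → ℚ | p 0 + p 1 = p 2}

variable (hL : Good L)

include hL

lemma Good.dlt {F G : (α → ℚ) → ℚ} (hF : DF L F) (hG : DF L G) : DP L (fun v => F v < G v) :=
  DP.rel2 (R := fun x y => x < y) hL.lt hF hG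

lemma Good.dle {F G : (α → ℚ) → ℚ} (hF : DF L F) (hG : DF L G) : DP L (fun v => F v ≤ G v) :=
  (hL.dlt hG hF).not.congr fun v => not_lt

lemma Good.dadd {F G : (α → ℚ) → ℚ} (hF : DF L F) (hG : DF L G) :
    DF L (fun v => F v + G v) :=
  DF.of_graph (DP.rel3 (R := fun x y z => x + y = z) hL.add hF.lift hG.lift (DF.var none))

lemma Good.dsub {F G : (α → ℚ) → ℚ} (hF : DF L F) (hG : DF L G) :
    DF L (fun v => F v - G v) :=
  DF.of_graph ((DP.rel3 (R := fun x y z => x + y = z) hL.add hG.lift (DF.var none)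
    hF.lift).congr fun v => by constructor <;> intro h <;> linarith)

lemma Good.dneg {F : (α → ℚ) → ℚ} (hF : DF L F) : DF L (fun v => - F v) := by
  simpa using hL.dsub (DF.const 0) hF

lemma Good.dmul (n : ℕ) {F : (α → ℚ) → ℚ} (hF : DF L F) : DF L (fun v => n * F v) := by
  induction n with
  | zero => simpa using DF.const 0
  | succ n ih =>
    have := hL.dadd ih hF
    simpa [add_mul] using this

lemma Good.dabs {F : (α → ℚ) → ℚ} (hF : DF L F) : DF L (fun v => |F v|) := by
  classical
  have := DefinableFun.ite (p := fun v => 0 ≤ F v) (hL.dle (DF.const 0) hF) hF (hL.dneg hF)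
  have h2 : (fun v => |F v|) = fun v => if 0 ≤ F v then F v else - F v := by
    ext v
    split_ifs with h
    · exact abs_of_nonneg h
    · exact abs_of_neg (not_le.1 h)
  rw [h2]
  exact this

lemma Good.dT {g : ℚ → ℚ} (hg : DU L g) {F G : (α → ℚ) → ℚ} (hF : DF L F) (hG : DF L G) :
    DF L (fun v => T g (F v) (G v)) :=
  hL.dsub (DF.app hg (hL.dadd hG hF)) (DF.app hg hG)

end defcalc

section main

variable {L : Language} [L.Structure ℚ] (hL : Good L)
  (homin : ∀ S : Set ℚ, Set.Definable₁ (univ : Set ℚ) L S → Tame S)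

include homin in
lemma tame_of {P : ℚ → Prop} (h : DP L (fun v : Fin 1 → ℚ => P (v 0))) : Tame {x | P x} :=
  homin _ h

include hL homin in
/-- There is no definable sublinear function tending to infinity. -/
lemma no_sublinear {g : ℚ → ℚ} (hg : DU L g) (htop : Tendsto g atTop atTop)
    (hsub : ∀ ε : ℚ, 0 < ε → ∀ᶠ x in atTop, g x ≤ ε * x) : False := by
  have hdich : ∀ (t : ℚ) (a b : ℕ), 0 < t →
      (∀ᶠ x in atTop, a * T g t x < b * T g t (x + t)) ∨
      (∀ᶠ x in atTop, ¬ (a * T g t x < b * T g t (x + t))) := by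
    intro t a b _
    refine Tame.dich (tame_of homin (P := fun x => a * T g t x < b * T g t (x + t)) ?_)
    exact hL.dlt (hL.dmul a (hL.dT hg (DF.const t) (DF.var 0)))
      (hL.dmul b (hL.dT hg (DF.const t) (hL.dadd (DF.var 0) (DF.const t))))
  have htame : Tame {l | 1 ≤ l ∧ ¬ InS g l} := by
    refine tame_of homin (P := fun l => 1 ≤ l ∧ ¬ InS g l) ?_
    refine (hL.dle (DF.const 1) (DF.var 0)).and (DP.not ?_)
    unfold InS
    refine DP.ex (DP.all (DP.imp (hL.dlt (DF.var _) (DF.var _)) (DP.ex ?_)))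
    exact (hL.dlt (DF.var _) (DF.var _)).and
      ((hL.dle (hL.dT hg (DF.var _) (DF.var _)) (hL.dT hg (DF.const 1) (DF.var _))).and
        (hL.dle (hL.dT hg (DF.var _) (DF.var _)) (hL.dT hg (DF.const 2) (DF.var _))))
  have hirr : ∀ l : ℚ, l ^ 2 ≠ 2 := by
    intro l hl
    apply irrational_sqrt_two
    refine ⟨|l|, ?_⟩
    have : ((|l| : ℚ) : ℝ) ^ 2 = 2 := by
      have h : |l| ^ 2 = 2 := by rw [sq_abs]; exact hl
      exact_mod_cast h
    rw [← this, Real.sqrt_sq (by exact_mod_cast abs_nonneg l)]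
  have hiff : ∀ l : ℚ, 1 ≤ l → (¬ InS g l ↔ 2 < l ^ 2) := by
    intro l h1
    constructor
    · intro h
      by_contra hc
      exact h (inS_of htop hsub hdich h1 (lt_of_le_of_ne (not_lt.1 hc) (hirr l)))
    · exact not_inS_of htop hsub hdich h1
  obtain ⟨c, hc1, hc2⟩ := htame.cut
    (by
      rintro x ⟨hx, hx'⟩ y hxy
      rw [hiff x hx] at hx'
      refine ⟨hx.trans hxy, (hiff y (hx.trans hxy)).2 ?_⟩
      nlinarith)
    ⟨2, by norm_num, (hiff 2 (by norm_num)).2 (by norm_num)⟩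
    ⟨0, fun h => by have := h.1; norm_num at this⟩
  have hc1' : ∀ x, c < x → 1 ≤ x ∧ 2 < x ^ 2 := fun x hx =>
    ⟨(hc1 x hx).1, (hiff x (hc1 x hx).1).1 (hc1 x hx).2⟩
  have hc2' : ∀ x, x < c → 1 ≤ x → x ^ 2 ≤ 2 := fun x hx h1 => by
    by_contra h
    exact hc2 x hx ⟨h1, (hiff x h1).2 (not_le.1 h)⟩
  have hcge : 1 ≤ c := by
    by_contra h
    push Not at h
    obtain ⟨d, h1, h2⟩ := exists_between h
    linarith [(hc1' d h1).1]
  rcases lt_or_gt_of_ne (hirr c) with h | h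
  · -- choose x slightly larger than c
    have h3 : c < 2 / c := by rw [lt_div_iff₀ (by linarith)]; nlinarith
    have hc' : c < 2 := by nlinarith
    have := (hc1' (c + (2 - c ^ 2) / 5) (by linarith)).2
    nlinarith
  · have hc3 : c ≤ 2 := by
      by_contra h2
      push Not at h2
      have := hc2' 2 h2 (by norm_num)
      norm_num at this
    have := hc2' (c - (c ^ 2 - 2) / 4) (by linarith) (by nlinarith)
    nlinarith

include hL homin in
lemma no_superlinear {F : ℚ → ℚ} (hF : DU L F)
    (hsup : ∀ n : ℕ, ∀ᶠ x in atTop, n * x ≤ F x) : False := by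
  have hcut : ∀ y : ℚ, ∃ c, (∀ x, c < x → 0 ≤ x ∧ ∀ z, x ≤ z → y ≤ F z) ∧
      ∀ x, x < c → ¬ (0 ≤ x ∧ ∀ z, x ≤ z → y ≤ F z) := by
    intro y
    refine Tame.cut (S := {x | 0 ≤ x ∧ ∀ z, x ≤ z → y ≤ F z})
      (tame_of homin (P := fun x => 0 ≤ x ∧ ∀ z, x ≤ z → y ≤ F z) ?_) ?_ ?_ ?_
    · exact (hL.dle (DF.const 0) (DF.var 0)).and (DP.all (DP.imp (hL.dle (DF.var _) (DF.var _))
        (hL.dle (DF.const y) (DF.app hF (DF.var _)))))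
    · rintro x ⟨hx, hx'⟩ w hw
      exact ⟨hx.trans hw, fun z hz => hx' z (hw.trans hz)⟩
    · obtain ⟨X, hX⟩ := eventually_atTop.1 (hsup 1)
      refine ⟨max 0 (max X y), le_max_left _ _, fun z hz => ?_⟩
      have h1 := hX z ((le_max_left X y).trans ((le_max_right _ _).trans hz))
      have h2 := (le_max_right X y).trans ((le_max_right 0 _).trans hz)
      simp at h1
      linarith
    · exact ⟨-1, fun h => by have := h.1; norm_num at this⟩
  choose g hg1 hg2 using hcut
  have hg : DU L g := by
    have hdef : DP L (fun p : Fin 2 → ℚ =>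
        (∀ x, p 1 < x → 0 ≤ x ∧ ∀ z, x ≤ z → p 0 ≤ F z) ∧
        ∀ x, x < p 1 → ¬ (0 ≤ x ∧ ∀ z, x ≤ z → p 0 ≤ F z)) := by
      refine DP.and (DP.all (DP.imp (hL.dlt (DF.var _) (DF.var _)) ?_))
        (DP.all (DP.imp (hL.dlt (DF.var _) (DF.var _)) (DP.not ?_)))
      all_goals
        exact (hL.dle (DF.const 0) (DF.var _)).and
          (DP.all (DP.imp (hL.dle (DF.var _) (DF.var _))
          (hL.dle (DF.var _) (DF.app hF (DF.var _)))))
    refine hdef.congr fun p => ?_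
    constructor
    · rintro ⟨h1, h2⟩
      rcases lt_trichotomy (p 1) (g (p 0)) with h | h | h
      · obtain ⟨d, hd1, hd2⟩ := exists_between h
        exact absurd (h1 d hd1) (hg2 _ d hd2)
      · exact h
      · obtain ⟨d, hd1, hd2⟩ := exists_between h
        exact absurd (hg1 _ d hd1) (h2 d hd2)
    · intro h
      rw [h]
      exact ⟨hg1 _, hg2 _⟩
  refine no_sublinear hL homin hg ?_ ?_
  · rw [tendsto_atTop]
    intro c
    filter_upwards [eventually_gt_atTop (F c)] with y hy
    by_contra h
    exact absurd ((hg1 y c (not_le.1 h)).2 c le_rfl) (not_le.2 hy)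
  · intro ε hε
    obtain ⟨n, hn⟩ := exists_nat_gt (1 / ε)
    have hn0 : (0 : ℚ) < n := lt_trans (by positivity) hn
    obtain ⟨X, hX⟩ := eventually_atTop.1 (hsup n)
    filter_upwards [eventually_ge_atTop (n * max X 0)] with y hy
    have hy1 : max X 0 ≤ y / n := by rw [le_div_iff₀ hn0]; linarith
    have hy0 : 0 ≤ y / n := (le_max_right _ _).trans hy1
    have h1 : g y ≤ y / n := by
      by_contra h
      refine hg2 y (y / n) (not_le.1 h) ⟨hy0, fun z hz => ?_⟩
      have h2 := hX z ((le_max_left X 0).trans (hy1.trans hz))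
      rw [div_le_iff₀ hn0] at hz
      linarith
    refine h1.trans ?_
    have hyn : 0 ≤ y := by
      have := mul_nonneg hn0.le (le_max_right X 0)
      linarith
    rw [div_le_iff₀ hn0]
    rw [div_lt_iff₀ hε] at hn
    nlinarith

include hL homin in
lemma lin_bounded {f : ℚ → ℚ} (hf : DU L f) :
    ∃ n : ℕ, 0 < n ∧ ∀ᶠ x in atTop, |f x| < n * x := by
  by_contra hcon
  have hF : DU L (fun x => |f x|) :=
    DP.eq (α := Fin 2) (DF.var 1) (hL.dabs (DF.app hf (DF.var 0)))
  refine no_superlinear hL homin hF fun n => ?_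
  have h1 : Tame {x | |f x| < (n + 1 : ℕ) * x} :=
    tame_of homin (P := fun x => |f x| < (n + 1 : ℕ) * x)
      (hL.dlt (hL.dabs (DF.app hf (DF.var 0))) (hL.dmul _ (DF.var 0)))
  rcases h1.dich with h | h
  · exact absurd ⟨n + 1, Nat.succ_pos n, h⟩ hcon
  · filter_upwards [h, eventually_ge_atTop 0] with x hx hx0
    simp only [mem_ofPred_eq, not_lt] at hx
    push_cast at hx
    linarith

end main

end OMinQ

/-- Every o-minimal expansion of `(ℚ, <, +, 0, 1)` is `ℚ`-linearly bounded:
for every definable `f : ℚ → ℚ` there are a positive integer `n` and `a ∈ ℚ` such that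
`|f x| < n * |x|` whenever `|x| > |a|`. -/
theorem stmt_5 (L : Language) [L.Structure ℚ]
    (hlt : Set.Definable (∅ : Set ℚ) L {p : Fin 2 → ℚ | p 0 < p 1})
    (hadd : Set.Definable (∅ : Set ℚ) L {p : Fin 3 → ℚ | p 0 + p 1 = p 2})
    (hzero : Set.Definable (∅ : Set ℚ) L {p : Fin 1 → ℚ | p 0 = 0})
    (hone : Set.Definable (∅ : Set ℚ) L {p : Fin 1 → ℚ | p 0 = 1})
    (homin : ∀ S : Set ℚ, Set.Definable₁ (univ : Set ℚ) L S →
      ∃ T : Finset (Set ℚ), S = ⋃₀ ↑T ∧ ∀ I ∈ T,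
        (∃ a : ℚ, I = {a}) ∨ (∃ a b : ℚ, I = Set.Ioo a b) ∨
          (∃ b : ℚ, I = Set.Iio b) ∨ (∃ a : ℚ, I = Set.Ioi a) ∨ I = univ) :
    ∀ f : ℚ → ℚ, Set.Definable (univ : Set ℚ) L {p : Fin 2 → ℚ | p 1 = f (p 0)} →
      ∃ (n : ℕ) (a : ℚ), 0 < n ∧ ∀ x : ℚ, |a| < |x| → |f x| < (n : ℚ) * |x| := by
  intro f hf
  have hL : OMinQ.Good L := ⟨hlt.mono (empty_subset _), hadd.mono (empty_subset _)⟩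
  have hf' : OMinQ.DU L (fun x => f (-x)) :=
    OMinQ.DP.eq (α := Fin 2) (OMinQ.DF.var 1) (OMinQ.DF.app hf (hL.dneg (OMinQ.DF.var 0)))
  obtain ⟨n, hn, h1⟩ := OMinQ.lin_bounded hL homin hf
  obtain ⟨m, hm, h2⟩ := OMinQ.lin_bounded hL homin hf'
  obtain ⟨a, ha⟩ := Filter.eventually_atTop.1 (h1.and h2)
  refine ⟨n + m, a, by omega, fun x hx => ?_⟩
  have h3 := ha |x| ((le_abs_self a).trans hx.le)
  have hx0 : 0 ≤ |x| := abs_nonneg x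
  have hn0 : (0 : ℚ) ≤ n * |x| := by positivity
  have hm0 : (0 : ℚ) ≤ m * |x| := by positivity
  push_cast
  rw [add_mul]
  rcases abs_cases x with ⟨h, _⟩ | ⟨h, _⟩
  · have := h3.1
    rw [h] at this hm0 ⊢
    linarith
  · have := h3.2
    rw [h] at this hn0 ⊢
    rw [neg_neg] at this
    linarith
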